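/- Let ε ∈ (0,1) and let n be a positive integer with ε(n+1) ≥ 1; set ρ = ⌊ε(n+1)⌋ − 1. Let μ be a probability measure on ℝ and X_1, …, X_{n+1} independent random variables each with law μ, and let X_{(n−ρ)} denote the (n−ρ)-th smallest value among X_1, …, X_n. Then P(X_{n+1} ≤ X_{(n−ρ)}) ≥ 1 − ε. -/

import Mathlib

open MeasureTheory

/-- The `k`-th smallest value (0-indexed) among `t 0, …, t (n-1)`. -/
noncomputable def orderStat {n : ℕ} (t : Fin n → ℝ) (k : Fin n) : ℝ :=
  (t ∘ Tuple.sort t) k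

/-!
Among `n + 1` reals, at least `k` have fewer than `k` others strictly below them. Under an
exchangeable law all coordinates are equally likely to have this property, so each has it with
probability at least `k / (n + 1)`. For the last coordinate it says precisely that the test score
does not exceed the `k`-th smallest calibration score, and `k = n - ρ = n + 1 - ⌊ε (n + 1)⌋` makes
`k / (n + 1) ≥ 1 - ε`.
-/

open scoped Finset ENNReal

lemma orderStat_lt_iff {n : ℕ} (t : Fin n → ℝ) (k : Fin n) (a : ℝ) :
    orderStat t k < a ↔ (k : ℕ) < #{i | t i < a} := by
  have hcard : #{i | (t ∘ Tuple.sort t) i < a} = #{i | t i < a} :=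
    Finset.card_equiv (Tuple.sort t) (by simp)
  rw [← hcard, Tuple.lt_card_lt_iff_apply_lt_of_monotone (Tuple.monotone_sort t)]
  rfl

section StrictRank

variable {ι α : Type*} [Fintype ι] [LinearOrder α]

/-- The strict rank of the coordinate `x j` within the family `x`, counted from `0`: tied
coordinates share the smallest of the positions they occupy in increasing order. -/
def strictRank (x : ι → α) (j : ι) : ℕ :=
  #{i | x i < x j}

lemma strictRank_comp_perm (x : ι → α) (σ : Equiv.Perm ι) (j : ι) :
    strictRank (fun i => x (σ i)) j = strictRank x (σ j) :=
  Finset.card_equiv σ (by simp)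

lemma strictRank_last {n : ℕ} (x : Fin (n + 1) → α) :
    strictRank x (Fin.last n) = #{i : Fin n | x i.castSucc < x (Fin.last n)} := by
  simp only [strictRank, Finset.card_filter, Fin.sum_univ_castSucc, lt_irrefl, if_false, add_zero]

lemma le_card_strictRank_lt (x : ι → α) {k : ℕ} (hk : k ≤ Fintype.card ι) :
    k ≤ #{j | strictRank x j < k} := by
  by_cases hall : ∀ j, strictRank x j < k
  · simpa [hall] using hk
  -- All coordinates below a smallest one of rank at least `k` have rank below `k`.
  · obtain ⟨j, hj, hmin⟩ :=
      Finset.exists_min_image {j | k ≤ strictRank x j} x (by simpa [Finset.Nonempty] using hall)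
    simp only [Finset.mem_filter_univ] at hj hmin
    calc k ≤ #{i | x i < x j} := hj
      _ ≤ #{i | strictRank x i < k} := Finset.card_le_card fun i hi => by
          simp only [Finset.mem_filter_univ] at hi ⊢
          exact lt_of_not_ge fun hki => (hmin i hki).not_gt hi

end StrictRank

lemma le_orderStat_iff_strictRank_last {n : ℕ} (x : Fin (n + 1) → ℝ) (k : Fin n) :
    x (Fin.last n) ≤ orderStat (fun i : Fin n => x i.castSucc) k ↔
      strictRank x (Fin.last n) < k + 1 := by
  rw [← not_lt, orderStat_lt_iff, ← strictRank_last, not_lt, Nat.lt_succ_iff]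

lemma natCast_mul_measure_univ_le_sum_measure {ι Ω : Type*} [Fintype ι] [MeasurableSpace Ω]
    (P : Measure Ω) (A : ι → Set Ω) [∀ ω, DecidablePred fun j => ω ∈ A j] {k : ℕ}
    (hA : ∀ ω, k ≤ #{j | ω ∈ A j}) :
    k * P Set.univ ≤ ∑ j, P (A j) := by
  classical
  have hcover (ω : Ω) : (k : ℝ≥0∞) ≤ ∑ j, (toMeasurable P (A j)).indicator 1 ω := by
    have hk : k ≤ #{j | ω ∈ toMeasurable P (A j)} :=
      (hA ω).trans <| Finset.card_le_card <|
        Finset.monotone_filter_right _ fun j _ hj => subset_toMeasurable P (A j) hj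
    simpa [Set.indicator_apply] using (Nat.cast_le (α := ℝ≥0∞)).2 hk
  calc k * P Set.univ
      = ∫⁻ _, k ∂P := (lintegral_const _).symm
    _ ≤ ∫⁻ ω, ∑ j, (toMeasurable P (A j)).indicator 1 ω ∂P := lintegral_mono hcover
    _ = ∑ j, ∫⁻ ω, (toMeasurable P (A j)).indicator 1 ω ∂P :=
        lintegral_finsetSum _ fun j _ =>
          measurable_one.indicator (measurableSet_toMeasurable P (A j))
    _ = ∑ j, P (A j) := by
        simp only [lintegral_indicator_one (measurableSet_toMeasurable _ _), measure_toMeasurable]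

/-- Exchangeability of a family of random variables, as a property of its joint law `P`:
permuting the coordinates does not change `P`. -/
def IsExchangeable {ι α : Type*} [MeasurableSpace α] (P : Measure (ι → α)) : Prop :=
  ∀ σ : Equiv.Perm ι, MeasurePreserving (fun x i => x (σ i)) P P

lemma isExchangeable_pi {ι α : Type*} [Fintype ι] [MeasurableSpace α] (μ : Measure α)
    [SigmaFinite μ] : IsExchangeable (Measure.pi fun _ : ι => μ) := fun σ =>
  measurePreserving_arrowCongr' (fun _ => μ) (fun _ => μ) σ.symm (.refl α) fun _ => .id μ

namespace IsExchangeable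

lemma measure_preimage {ι α : Type*} [MeasurableSpace α] {P : Measure (ι → α)}
    (hP : IsExchangeable P) (σ : Equiv.Perm ι) (s : Set (ι → α)) :
    P ((fun x i => x (σ i)) ⁻¹' s) = P s :=
  (hP σ).measure_preimage_emb
    (MeasurableEquiv.arrowCongr' σ.symm (MeasurableEquiv.refl α)).measurableEmbedding s

section StrictRank

variable {ι α : Type*} [Fintype ι] [LinearOrder α] [MeasurableSpace α] {P : Measure (ι → α)}

lemma measure_strictRank_lt_eq (hP : IsExchangeable P) (k : ℕ) (i j : ι) :
    P {x | strictRank x i < k} = P {x | strictRank x j < k} := by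
  classical
  rw [← hP.measure_preimage (Equiv.swap i j) {x | strictRank x j < k}]
  simp [strictRank_comp_perm]

lemma div_card_le_measure_strictRank_lt [IsProbabilityMeasure P] (hP : IsExchangeable P) {k : ℕ}
    (hk : k ≤ Fintype.card ι) (j : ι) :
    (k / Fintype.card ι : ℝ≥0∞) ≤ P {x | strictRank x j < k} := by
  refine ENNReal.div_le_of_le_mul' ?_
  calc (k : ℝ≥0∞)
      = k * P Set.univ := by rw [measure_univ, mul_one]
    _ ≤ ∑ i, P {x | strictRank x i < k} :=
        natCast_mul_measure_univ_le_sum_measure P _ fun x => le_card_strictRank_lt x hk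
    _ = Fintype.card ι * P {x | strictRank x j < k} := by
        simp [fun i => hP.measure_strictRank_lt_eq k i j]

end StrictRank

lemma div_le_measure_le_orderStat {n : ℕ} {P : Measure (Fin (n + 1) → ℝ)}
    [IsProbabilityMeasure P] (hP : IsExchangeable P) (k : Fin n) :
    ENNReal.ofReal ((k + 1) / (n + 1)) ≤
      P {x | x (Fin.last n) ≤ orderStat (fun i : Fin n => x i.castSucc) k} := by
  have hk : (k : ℕ) + 1 ≤ Fintype.card (Fin (n + 1)) := by simp [k.isLt.le]
  have hrank := hP.div_card_le_measure_strictRank_lt hk (Fin.last n)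
  rw [Fintype.card_fin] at hrank
  rw [ENNReal.ofReal_div_of_pos (by positivity)]
  simp only [le_orderStat_iff_strictRank_last]
  exact_mod_cast hrank

end IsExchangeable

lemma one_sub_le_succ_div_succ {ε : ℝ} (hε : ε < 1) {n k : ℕ} (h1 : 1 ≤ ε * (n + 1))
    (hk : k = n - (⌊ε * (n + 1)⌋₊ - 1) - 1) :
    1 - ε ≤ (k + 1) / (n + 1) := by
  have hpos : (0 : ℝ) < n + 1 := by positivity
  have hfloor_le : (⌊ε * (n + 1)⌋₊ : ℝ) ≤ ε * (n + 1) := Nat.floor_le (zero_le_one.trans h1)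
  have hfloor_pos : 1 ≤ ⌊ε * (n + 1)⌋₊ := (Nat.one_le_floor_iff _).2 h1
  have hfloor_lt : ⌊ε * (n + 1)⌋₊ < n + 1 := by
    exact_mod_cast hfloor_le.trans_lt (mul_lt_of_lt_one_left hpos hε)
  have hindex : k + 1 + ⌊ε * (n + 1)⌋₊ = n + 1 := by omega
  have hindex_real : (k : ℝ) + 1 + ⌊ε * (n + 1)⌋₊ = n + 1 := by exact_mod_cast hindex
  rw [le_div_iff₀ hpos]
  linarith

theorem stmt17_general {ε : ℝ} (hε : ε < 1) {n : ℕ} (h1 : 1 ≤ ε * (n + 1)) {k : Fin n}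
    (hk : (k : ℕ) = n - (⌊ε * (n + 1)⌋₊ - 1) - 1) {P : Measure (Fin (n + 1) → ℝ)}
    [IsProbabilityMeasure P] (hP : IsExchangeable P) :
    ENNReal.ofReal (1 - ε) ≤
      P {ω | ω (Fin.last n) ≤ orderStat (fun i : Fin n => ω i.castSucc) k} :=
  (ENNReal.ofReal_le_ofReal (one_sub_le_succ_div_succ hε h1 hk)).trans
    (hP.div_le_measure_le_orderStat k)

/-- marginal coverage of split conformal prediction: with outlier budget
`ρ = ⌊ε(n+1)⌋ − 1` and threshold the `(n−ρ)`-th smallest of the i.i.d. calibration scores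
`X_1, …, X_n`, a fresh sample `X_{n+1}` is covered with probability at least `1 − ε`. -/
theorem stmt17 (ε : ℝ) (hε : ε ∈ Set.Ioo (0 : ℝ) 1) (n : ℕ) (hn : 0 < n)
    (h1 : 1 ≤ ε * (n + 1)) (μ : Measure ℝ) [IsProbabilityMeasure μ] :
    ENNReal.ofReal (1 - ε) ≤
      Measure.pi (fun _ : Fin (n + 1) => μ)
        {ω | ω (Fin.last n) ≤ orderStat (fun i : Fin n => ω i.castSucc)
            ⟨n - (⌊ε * (n + 1)⌋₊ - 1) - 1, by omega⟩} :=
  stmt17_general hε.2 h1 rfl (isExchangeable_pi μ)
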